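/- arXiv:1808.01670 — 7 statements merged into one kernel-verified Lean document; each statement's English description precedes it below -/
import Mathlib

section
/- Let (L;≤,⊕,',0,1) be a weak lattice effect algebra, and define the total operations a⊗b = (a'⊕(a∧b'))', a→ₛb = a'⊕(a∧b), and a⊙b = (a'⊕b')' (whenever the relevant sums are defined; note a∧b' ≤ b'' so these Sasaki operations are always defined). Then the following are equivalent: (RD1) the partial operation ⊕ makes (L;⊕,0,1) an effect algebra in which a' is the orthosupplement of a and whose induced effect-algebra order coincides with ≤ (so L is a lattice effect algebra); (RD2) for all a,b,x: a⊗x ≤ b if and only if x ≤ a→ₛb; (RD3) for all a,b,x: b' ≤ a'⊕(a∧x') if and only if x ≤ a'⊕(a∧b); (RD4) for all a,b: a ≤ b if and only if a→ₛb = 1; (RD5) for all a,b: a⊕b = 1 if and only if b = a'; (RD6) for all a,b,c: if a⊕b = c then a⊕c' = b'; (RD7) for all a,b: if a ≤ b then a⊕(a'⊙b) = b; (RD8) for all a,b: a ≤ b if and only if there exists a unique c with a⊕c = b. -/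
/-- A weak lattice effect algebra: a bounded involutive lattice with a partial
binary operation ⊕, encoded as a total function `add` whose value is only
constrained (and only meaningful) on the definedness domain `a ≤ inv b`. -/
structure WeakLEA (L : Type*) [Lattice L] [BoundedOrder L] where
  inv : L → L
  inv_inv : ∀ a : L, inv (inv a) = a
  inv_antitone : ∀ a b : L, a ≤ b → inv b ≤ inv a
  add : L → L → L
  comm : ∀ a b : L, a ≤ inv b → (b ≤ inv a ∧ add a b = add b a)
  assoc : ∀ a b c : L, b ≤ inv c → a ≤ inv (add b c) →
    (a ≤ inv b ∧ add a b ≤ inv c ∧ add a (add b c) = add (add a b) c)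
  add_zero : ∀ a : L, add a ⊥ = a

variable {L : Type*} [Lattice L] [BoundedOrder L]

/-- Sasaki product: a⊗b = (a'⊕(a∧b'))'. -/
def WeakLEA.sprod (W : WeakLEA L) (a b : L) : L :=
  W.inv (W.add (W.inv a) (a ⊓ W.inv b))

/-- Sasaki arrow: a→ₛb = a'⊕(a∧b). -/
def WeakLEA.sarrow (W : WeakLEA L) (a b : L) : L :=
  W.add (W.inv a) (a ⊓ b)

/-- a⊙b = (a'⊕b')'. -/
def WeakLEA.sdot (W : WeakLEA L) (a b : L) : L :=
  W.inv (W.add (W.inv a) (W.inv b))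

/-- (RD1): the partial operation ⊕ (i.e. `add` restricted to the pairs with
`a ≤ inv b`) makes `L` into an effect algebra in which `inv a` is the
orthosupplement of `a` and whose induced effect-algebra order coincides with
the lattice order `≤` (the axioms (E1),(E2) of effect algebras are already part
of `WeakLEA`). Hence `L` is a lattice effect algebra. -/
def WeakLEA.IsLEA (W : WeakLEA L) : Prop :=
  (∀ a : L, W.add a (W.inv a) = ⊤) ∧
  (∀ a b : L, a ≤ W.inv b → W.add a b = ⊤ → b = W.inv a) ∧
  (∀ a : L, a ≤ W.inv ⊤ → a = ⊥) ∧
  (∀ a b : L, a ≤ b ↔ ∃ c, a ≤ W.inv c ∧ W.add a c = b)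

/-!
The eight conditions all say that supplements are unique, which is (RD5). Two observations carry
the proof. First, uniqueness follows as soon as every inequality `a ≤ b` is witnessed by some `c`
with `a ⊕ c = b`: if `a ⊕ c = ⊤` then `c ≤ a'`, say `c ⊕ d = a'`, and associativity makes `⊤ ⊕ d`
defined, so `d = ⊥` and `c = a'`. Second, if `a ⊕ b = c`, then reassociating `c' ⊕ (a ⊕ b) = ⊤` to
`(c' ⊕ a) ⊕ b = ⊤` and using uniqueness gives the exchange rule `a ⊕ c' = b'`, which yields
differences and cancellation. Applied to `a →ₛ b = a' ⊕ (a ∧ b)`, the exchange rule gives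
`a ⊗ (a →ₛ b) = a ∧ b`, from which the Sasaki adjunction follows because `⊗` and `→ₛ` are monotone
and dual under the involution.
-/

namespace WeakLEA

variable (W : WeakLEA L) {a b c d e : L}

theorem le_inv_comm : a ≤ W.inv b ↔ b ≤ W.inv a :=
  ⟨fun h => (W.comm a b h).1, fun h => (W.comm b a h).1⟩

theorem inv_le_inv_iff : W.inv a ≤ W.inv b ↔ b ≤ a := by
  rw [W.le_inv_comm, W.inv_inv]

theorem inv_le_comm : W.inv a ≤ b ↔ W.inv b ≤ a := by
  rw [← W.inv_le_inv_iff, W.inv_inv]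

theorem inv_top : W.inv ⊤ = ⊥ :=
  le_bot_iff.1 (W.inv_le_comm.1 le_top)

/-- The relation that `a ⊕ b` is defined and equals `c`. It keeps the domain condition and the value
together, so that the values of `add` outside the domain never enter. -/
def IsSum (a b c : L) : Prop :=
  a ≤ W.inv b ∧ W.add a b = c

/-- Condition (RD5): the only supplement of `a` with respect to `⊕` is `inv a`. -/
def HasUniqueSupplements : Prop :=
  ∀ a b : L, W.IsSum a b ⊤ ↔ b = W.inv a

variable {W}

namespace IsSum

theorem symm (h : W.IsSum a b c) : W.IsSum b a c :=
  ⟨W.le_inv_comm.1 h.1, (W.comm a b h.1).2.symm.trans h.2⟩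

theorem exists_assoc (hbc : W.IsSum b c d) (had : W.IsSum a d e) :
    ∃ s, W.IsSum a b s ∧ W.IsSum s c e := by
  obtain ⟨h_dom, rfl⟩ := hbc
  obtain ⟨hab, h_sum, h_eq⟩ := W.assoc a b c h_dom had.1
  exact ⟨W.add a b, ⟨hab, rfl⟩, h_sum, h_eq.symm.trans had.2⟩

theorem left_le (h : W.IsSum a b c) : a ≤ c := by
  obtain ⟨_, hs, _⟩ := h.exists_assoc ⟨le_refl (W.inv c), rfl⟩
  exact W.inv_le_inv_iff.1 hs.1

theorem eq_bot_of_top_left (h : W.IsSum ⊤ b c) : b = ⊥ :=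
  le_bot_iff.1 (W.inv_top ▸ h.symm.1)

end IsSum

theorem isSum_sarrow : W.IsSum (W.inv a) (a ⊓ b) (W.sarrow a b) :=
  ⟨W.inv_antitone _ _ inf_le_left, rfl⟩

theorem isSum_inv_iff_sarrow : W.IsSum (W.inv a) b c ↔ b ≤ a ∧ W.sarrow a b = c := by
  rw [IsSum, W.inv_le_inv_iff]
  refine and_congr_right fun hba => ?_
  rw [sarrow, inf_eq_right.2 hba]

theorem sprod_le_iff_inv_le_sarrow :
    W.sprod a c ≤ b ↔ W.inv b ≤ W.sarrow a (W.inv c) :=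
  W.inv_le_comm

theorem sprod_top : W.sprod a ⊤ = a := by
  rw [sprod, W.inv_top, inf_bot_eq, W.add_zero, W.inv_inv]

theorem le_iff_sarrow_eq_top (h : GaloisConnection (W.sprod a) (W.sarrow a)) :
    a ≤ b ↔ W.sarrow a b = ⊤ := by
  rw [← top_le_iff, ← h ⊤ b, sprod_top]

theorem hasUniqueSupplements_of_le_iff_sarrow_eq_top
    (h : ∀ a b : L, a ≤ b ↔ W.sarrow a b = ⊤) : W.HasUniqueSupplements := by
  intro a b
  calc W.IsSum a b ⊤ ↔ W.IsSum (W.inv (W.inv a)) b ⊤ := by rw [W.inv_inv]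
    _ ↔ b ≤ W.inv a ∧ W.sarrow (W.inv a) b = ⊤ := isSum_inv_iff_sarrow
    _ ↔ b ≤ W.inv a ∧ W.inv a ≤ b := and_congr_right' (h _ _).symm
    _ ↔ b = W.inv a := le_antisymm_iff.symm

theorem hasUniqueSupplements_of_exists_isSum
    (h : ∀ a b : L, a ≤ b → ∃ c, W.IsSum a c b) : W.HasUniqueSupplements := by
  have eq_inv {a c : L} (hac : W.IsSum a c ⊤) : c = W.inv a := by
    obtain ⟨d, hcd⟩ := h c (W.inv a) hac.symm.1
    obtain ⟨s, hs, hsd⟩ := hcd.exists_assoc ⟨(W.inv_inv a).ge, rfl⟩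
    obtain rfl : ⊤ = s := hac.2.symm.trans hs.2
    rw [← hcd.2, hsd.eq_bot_of_top_left, W.add_zero]
  refine fun a b => ⟨eq_inv, ?_⟩
  rintro rfl
  obtain ⟨c, hc⟩ := h a ⊤ le_top
  exact eq_inv hc ▸ hc

theorem isSum_sdot_of_exchange
    (h : ∀ b c : L, W.IsSum a b c → W.IsSum a (W.inv c) (W.inv b)) (hab : a ≤ b) :
    W.IsSum a (W.sdot (W.inv a) b) b := by
  have hsum : W.IsSum a (W.inv b) (W.add a (W.inv b)) := ⟨(W.inv_inv b).symm ▸ hab, rfl⟩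
  simpa only [sdot, W.inv_inv] using h _ _ hsum

namespace HasUniqueSupplements

theorem exchange (h : W.HasUniqueSupplements) (habc : W.IsSum a b c) :
    W.IsSum a (W.inv c) (W.inv b) := by
  obtain ⟨s, hs, hsb⟩ := habc.exists_assoc ((h (W.inv c) c).2 (W.inv_inv c).symm)
  obtain rfl : b = W.inv s := (h s b).1 hsb
  rw [W.inv_inv]
  exact hs.symm

theorem cancel_left (h : W.HasUniqueSupplements) (hb : W.IsSum a b d) (hc : W.IsSum a c d) :
    b = c :=
  Function.Involutive.injective W.inv_inv ((h.exchange hb).2.symm.trans (h.exchange hc).2)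

theorem le_iff_exists_isSum (h : W.HasUniqueSupplements) : a ≤ b ↔ ∃ c, W.IsSum a c b :=
  ⟨fun hab => ⟨_, isSum_sdot_of_exchange (fun _ _ => h.exchange) hab⟩,
    fun ⟨_, hc⟩ => hc.left_le⟩

theorem le_iff_existsUnique_isSum (h : W.HasUniqueSupplements) :
    a ≤ b ↔ ∃! c, W.IsSum a c b :=
  h.le_iff_exists_isSum.trans
    ⟨fun ⟨c, hc⟩ => ⟨c, hc, fun _ hd => h.cancel_left hd hc⟩, ExistsUnique.exists⟩

theorem isLEA (h : W.HasUniqueSupplements) : W.IsLEA :=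
  ⟨fun a => ((h a _).2 rfl).2, fun a b hab htop => (h a b).1 ⟨hab, htop⟩,
    fun _ ha => le_bot_iff.1 (W.inv_top ▸ ha), fun _ _ => h.le_iff_exists_isSum⟩

theorem sarrow_mono (h : W.HasUniqueSupplements) : Monotone (W.sarrow a) := by
  intro b c hbc
  obtain ⟨d, hd⟩ := h.le_iff_exists_isSum.1 (inf_le_inf_left a hbc)
  obtain ⟨s, hs, hsd⟩ := hd.exists_assoc isSum_sarrow
  exact hs.2.trans_le hsd.left_le

theorem sprod_mono (h : W.HasUniqueSupplements) : Monotone (W.sprod a) :=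
  fun _ _ hbc => W.inv_antitone _ _ (h.sarrow_mono (W.inv_antitone _ _ hbc))

theorem sprod_sarrow (h : W.HasUniqueSupplements) : W.sprod a (W.sarrow a b) = a ⊓ b :=
  calc W.sprod a (W.sarrow a b) = W.inv (W.inv (a ⊓ b)) :=
        congrArg W.inv (isSum_inv_iff_sarrow.1 (h.exchange isSum_sarrow)).2
    _ = a ⊓ b := W.inv_inv _

theorem gc_sprod_sarrow (h : W.HasUniqueSupplements) :
    GaloisConnection (W.sprod a) (W.sarrow a) := by
  have sprod_le {b x : L} (hx : x ≤ W.sarrow a b) : W.sprod a x ≤ b :=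
    calc W.sprod a x ≤ W.sprod a (W.sarrow a b) := h.sprod_mono hx
      _ = a ⊓ b := h.sprod_sarrow
      _ ≤ b := inf_le_right
  refine fun x b => ⟨fun hx => ?_, sprod_le⟩
  have hb : W.sprod a (W.inv b) ≤ W.inv x := sprod_le (sprod_le_iff_inv_le_sarrow.1 hx)
  simpa only [sprod_le_iff_inv_le_sarrow, W.inv_inv] using hb

end HasUniqueSupplements

end WeakLEA

theorem weakLEA_tfae (W : WeakLEA L) :
    List.TFAE
      [ -- (RD1)
        W.IsLEA,
        -- (RD2)
        ∀ a b x : L, W.sprod a x ≤ b ↔ x ≤ W.sarrow a b,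
        -- (RD3)
        ∀ a b x : L,
          W.inv b ≤ W.add (W.inv a) (a ⊓ W.inv x) ↔ x ≤ W.add (W.inv a) (a ⊓ b),
        -- (RD4)
        ∀ a b : L, a ≤ b ↔ W.sarrow a b = ⊤,
        -- (RD5)
        ∀ a b : L, (a ≤ W.inv b ∧ W.add a b = ⊤) ↔ b = W.inv a,
        -- (RD6)
        ∀ a b c : L, a ≤ W.inv b → W.add a b = c →
          (a ≤ W.inv (W.inv c) ∧ W.add a (W.inv c) = W.inv b),
        -- (RD7)
        ∀ a b : L, a ≤ b →
          (a ≤ W.inv (W.sdot (W.inv a) b) ∧ W.add a (W.sdot (W.inv a) b) = b),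
        -- (RD8)
        ∀ a b : L, a ≤ b ↔ ∃! c, a ≤ W.inv c ∧ W.add a c = b ] := by
  tfae_have 2 ↔ 3 :=
    forall₃_congr fun _ _ _ => iff_congr WeakLEA.sprod_le_iff_inv_le_sarrow Iff.rfl
  tfae_have 2 → 4 := fun h a b => WeakLEA.le_iff_sarrow_eq_top fun x c => h a c x
  tfae_have 4 → 5 := WeakLEA.hasUniqueSupplements_of_le_iff_sarrow_eq_top
  tfae_have 5 → 2 := fun h _ b x => WeakLEA.HasUniqueSupplements.gc_sprod_sarrow h x b
  tfae_have 5 → 1 := WeakLEA.HasUniqueSupplements.isLEA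
  tfae_have 1 → 5 := fun h =>
    WeakLEA.hasUniqueSupplements_of_exists_isSum fun a b => (h.2.2.2 a b).1
  tfae_have 5 → 6 := fun h _ _ _ hab hc => WeakLEA.HasUniqueSupplements.exchange h ⟨hab, hc⟩
  tfae_have 6 → 7 := fun h a _ =>
    WeakLEA.isSum_sdot_of_exchange fun b c habc => h a b c habc.1 habc.2
  tfae_have 7 → 5 := fun h =>
    WeakLEA.hasUniqueSupplements_of_exists_isSum fun a b hab => ⟨_, h a b hab⟩
  tfae_have 5 → 8 := fun h _ _ => WeakLEA.HasUniqueSupplements.le_iff_existsUnique_isSum h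
  tfae_have 8 → 5 := fun h =>
    WeakLEA.hasUniqueSupplements_of_exists_isSum fun a b hab => ((h a b).1 hab).exists
  tfae_finish
end

section
/- Let (L;≤,·,→,',0,1) be a system in which (L;≤,',0,1) is a bounded involutive lattice and the binary operations · and → satisfy: (cw1) a·b = (a→b')'; (cw2) if a≤b' then a'→b = b'→a and a ≤ a'→b; (cw3) if a≤b' and a≤c', then a'→b ≤ c' implies a'→c ≤ b'; (cw4) if b'≤c and a'≤b·c then a·(b·c) = (a·b)·c; (cw5) a·1 = a. Define the partial operation ⊕ by a⊕b = a'→b whenever a≤b', and undefined otherwise. Then (L;≤,⊕,',0,1) is a weak lattice effect algebra. -/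
variable {L : Type*} [Lattice L] [BoundedOrder L]

/-! By (cw1), `⊕` and `·` are De Morgan dual under the involution, so (cw4) and (cw5) become the
associativity and unit laws of `⊕`. What remains for (W2) is definedness: `a ⊕ b` exists because
`b ≤ b ⊕ c ≤ a'`, and `(a ⊕ b) ⊕ c` exists because (cw3) allows `a` and `c` to be exchanged in
`b ⊕ c ≤ a'`, giving `b ⊕ a ≤ c'` for the commuted sum. -/

section AntitoneInvolution

variable {α : Type*} {inv : α → α}

theorem le_map_comm_of_involutive_of_antitone [Preorder α] (hinv : Function.Involutive inv)
    (hanti : Antitone inv) {a b : α} : a ≤ inv b ↔ b ≤ inv a :=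
  ⟨fun h => (hinv b).ge.trans (hanti h), fun h => (hinv a).ge.trans (hanti h)⟩

theorem map_top_of_involutive_of_antitone [PartialOrder α] [OrderBot α] [OrderTop α]
    (hinv : Function.Involutive inv) (hanti : Antitone inv) : inv ⊤ = ⊥ :=
  le_bot_iff.mp ((hanti le_top).trans_eq (hinv ⊥))

end AntitoneInvolution

section DeMorgan

variable {α : Type*} {inv : α → α} {add mul : α → α → α}

theorem add_bot_of_deMorgan [PartialOrder α] [OrderBot α] [OrderTop α]
    (hinv : Function.Involutive inv) (hanti : Antitone inv)
    (deMorgan : ∀ a b, inv (add a b) = mul (inv a) (inv b))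
    (mul_top : ∀ a, mul a ⊤ = a) (a : α) : add a ⊥ = a := by
  apply hinv.injective
  calc inv (add a ⊥) = mul (inv a) (inv (inv ⊤)) := by
        rw [deMorgan, map_top_of_involutive_of_antitone hinv hanti]
    _ = inv a := by rw [hinv, mul_top]

theorem add_assoc_of_deMorgan [LE α] (hinv : Function.Involutive inv)
    (deMorgan : ∀ a b, inv (add a b) = mul (inv a) (inv b))
    (mul_assoc : ∀ a b c, inv b ≤ c → inv a ≤ mul b c → mul a (mul b c) = mul (mul a b) c)
    {a b c : α} (hbc : b ≤ inv c) (habc : a ≤ inv (add b c)) :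
    add a (add b c) = add (add a b) c := by
  have hbc' : inv (inv b) ≤ inv c := by rwa [hinv]
  have habc' : inv (inv a) ≤ mul (inv b) (inv c) := by rwa [hinv, ← deMorgan]
  apply hinv.injective
  calc inv (add a (add b c)) = mul (inv a) (mul (inv b) (inv c)) := by rw [deMorgan, deMorgan]
    _ = mul (mul (inv a) (inv b)) (inv c) := mul_assoc _ _ _ hbc' habc'
    _ = inv (add (add a b) c) := by rw [deMorgan, deMorgan]

end DeMorgan

section Definedness

variable {α : Type*} [Preorder α] {inv : α → α} {add : α → α → α} {a b c : α}

theorem le_inv_of_le_inv_add (hanti : Antitone inv)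
    (le_add : ∀ a b, a ≤ inv b → a ≤ add a b)
    (hbc : b ≤ inv c) (habc : a ≤ inv (add b c)) : a ≤ inv b :=
  habc.trans (hanti (le_add b c hbc))

theorem add_le_inv_of_le_inv_add (hinv : Function.Involutive inv) (hanti : Antitone inv)
    (add_comm : ∀ a b, a ≤ inv b → add a b = add b a)
    (exchange : ∀ a b c, a ≤ inv b → a ≤ inv c → add a b ≤ inv c → add a c ≤ inv b)
    (hab : a ≤ inv b) (hbc : b ≤ inv c) (habc : a ≤ inv (add b c)) : add a b ≤ inv c := by
  have hba : b ≤ inv a := (le_map_comm_of_involutive_of_antitone hinv hanti).mp hab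
  have hbca : add b c ≤ inv a := (le_map_comm_of_involutive_of_antitone hinv hanti).mp habc
  exact (add_comm a b hab).trans_le (exchange b c a hbc hba hbca)

end Definedness

/-- Theorem: if (L;≤,',0,1) is a bounded involutive lattice and the binary
operations · and → satisfy (cw1)–(cw5), then L can be arranged into a weak
lattice effect algebra by setting a⊕b = a'→b whenever a ≤ b' (and undefined
otherwise). -/
theorem invLattice_to_weakLEA (inv : L → L) (mul arr : L → L → L)
    (inv_inv : ∀ a : L, inv (inv a) = a)
    (inv_antitone : ∀ a b : L, a ≤ b → inv b ≤ inv a)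
    (cw1 : ∀ a b : L, mul a b = inv (arr a (inv b)))
    (cw2 : ∀ a b : L, a ≤ inv b →
      arr (inv a) b = arr (inv b) a ∧ a ≤ arr (inv a) b)
    (cw3 : ∀ a b c : L, a ≤ inv b → a ≤ inv c →
      arr (inv a) b ≤ inv c → arr (inv a) c ≤ inv b)
    (cw4 : ∀ a b c : L, inv b ≤ c → inv a ≤ mul b c →
      mul a (mul b c) = mul (mul a b) c)
    (cw5 : ∀ a : L, mul a ⊤ = a) :
    ∃ W : WeakLEA L, W.inv = inv ∧
      ∀ a b : L, a ≤ inv b → W.add a b = arr (inv a) b := by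
  have hanti : Antitone inv := fun a b => inv_antitone a b
  let add : L → L → L := fun a b => arr (inv a) b
  have deMorgan : ∀ a b, inv (add a b) = mul (inv a) (inv b) := fun a b => by
    rw [cw1, inv_inv]
  have add_comm : ∀ a b, a ≤ inv b → add a b = add b a := fun a b hab => (cw2 a b hab).1
  have le_add : ∀ a b, a ≤ inv b → a ≤ add a b := fun a b hab => (cw2 a b hab).2
  let W : WeakLEA L :=
    { inv, inv_inv, inv_antitone, add
      comm := fun a b hab =>
        ⟨(le_map_comm_of_involutive_of_antitone inv_inv hanti).mp hab, add_comm a b hab⟩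
      assoc := fun a b c hbc habc =>
        have hab : a ≤ inv b := le_inv_of_le_inv_add hanti le_add hbc habc
        ⟨hab, add_le_inv_of_le_inv_add inv_inv hanti add_comm cw3 hab hbc habc,
          add_assoc_of_deMorgan inv_inv deMorgan cw4 hbc habc⟩
      add_zero := add_bot_of_deMorgan inv_inv hanti deMorgan cw5 }
  exact ⟨W, rfl, fun _ _ _ => rfl⟩
end

section
/- Let (L;≤,·,→,0,1) be an involutive CI-lattice (i.e. a CI-lattice such that, setting a' := a→0, the structure (L;≤,',0,1) is a bounded involutive lattice) that moreover satisfies: (cw1) a·b = (a→b')'; (cw2) if a≤b' then a'→b = b'→a and a ≤ a'→b; (cw3) if a≤b' and a≤c', then a'→b ≤ c' implies a'→c ≤ b'; (cw4) if b'≤c and a'≤b·c then a·(b·c) = (a·b)·c. Define a⊕b = a'→b whenever a≤b' (undefined otherwise). Then (L;⊕,0,1) is a lattice effect algebra in which a' is the orthosupplement of a, whose induced effect-algebra order coincides with ≤, and whose Sasaki arrow coincides with →, i.e. a→ₛb = a→b for all a,b. -/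
variable {L : Type*} [Lattice L] [BoundedOrder L]

section Poset

variable {P : Type*} [PartialOrder P] [BoundedOrder P] (mul arr : P → P → P)

/-- The negation `a′ = a → 0`, written `∼a` below; it becomes the orthosupplement. -/
abbrev ciInv (a : P) : P := arr a ⊥

/-- The sum `a ⊕ b = a′ → b`, written `a ∔ b` below. It is a total function here, while the
partial operation of an effect algebra is its restriction to `a ≤ b′`. -/
abbrev ciAdd (a b : P) : P := arr (ciInv arr a) b

local infixr:60 " ⇒ " => arr
local infixl:70 " ⊙ " => mul
local infixl:65 " ∔ " => ciAdd arr
local prefix:max "∼" => ciInv arr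

/-- The axioms (CI1) and (CI2) of a CI-lattice, over a bounded poset: a CI-lattice is a lattice
with this property. The operations `·` and `→` are passed as `mul` and `arr`. -/
structure IsCIPoset : Prop where
  top_mul : ∀ a, ⊤ ⊙ a = a
  mul_top : ∀ a, a ⊙ ⊤ = a
  mul_le_iff : ∀ {a b c}, a ⊙ c ≤ b ↔ c ≤ a ⇒ b

/-- An involutive CI-lattice, over a bounded poset: negation is an antitone involution. -/
structure IsInvolutiveCIPoset : Prop extends IsCIPoset mul arr where
  inv_inv : ∀ a, ∼∼a = a
  inv_antitone : ∀ {a b}, a ≤ b → ∼b ≤ ∼a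

/-- An involutive CI-lattice, over a bounded poset, with the properties (cw1), (cw2) (split into
`add_comm` and `le_add`), (cw3) and (cw4) that characterise lattice effect algebras. -/
structure IsEffectCIPoset : Prop extends IsInvolutiveCIPoset mul arr where
  mul_eq : ∀ a b, a ⊙ b = ∼(a ⇒ ∼b)
  add_comm : ∀ {a b}, a ≤ ∼b → a ∔ b = b ∔ a
  le_add : ∀ {a b}, a ≤ ∼b → a ≤ a ∔ b
  add_le_inv_swap : ∀ {a b c}, a ≤ ∼b → a ≤ ∼c → a ∔ b ≤ ∼c → a ∔ c ≤ ∼b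
  mul_assoc : ∀ {a b c}, ∼b ≤ c → ∼a ≤ b ⊙ c → a ⊙ (b ⊙ c) = a ⊙ b ⊙ c

variable {mul arr} {a b c : P}

namespace IsCIPoset

variable (h : IsCIPoset mul arr)
include h

theorem arr_eq_top_iff : a ⇒ b = ⊤ ↔ a ≤ b := by
  rw [← top_le_iff, ← h.mul_le_iff, h.mul_top]

theorem top_arr (a : P) : ⊤ ⇒ a = a :=
  eq_of_forall_le_iff fun c => by rw [← h.mul_le_iff, h.top_mul]

theorem le_arr_mul (a b : P) : b ≤ a ⇒ a ⊙ b :=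
  h.mul_le_iff.1 le_rfl

theorem mul_le_left (a b : P) : a ⊙ b ≤ a :=
  h.mul_le_iff.2 (le_top.trans_eq (h.arr_eq_top_iff.2 le_rfl).symm)

theorem inv_top : ∼(⊤ : P) = ⊥ :=
  h.top_arr ⊥

theorem add_inv_self (a : P) : a ∔ ∼a = ⊤ :=
  h.arr_eq_top_iff.2 le_rfl

end IsCIPoset

namespace IsInvolutiveCIPoset

variable (h : IsInvolutiveCIPoset mul arr)
include h

theorem le_inv_symm (hab : a ≤ ∼b) : b ≤ ∼a :=
  (h.inv_inv b).ge.trans (h.inv_antitone hab)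

theorem inv_injective : Function.Injective (ciInv arr) :=
  Function.LeftInverse.injective h.inv_inv

theorem eq_inv_of_add_eq_top (hab : a ≤ ∼b) (htop : a ∔ b = ⊤) : b = ∼a :=
  le_antisymm (h.le_inv_symm hab) (h.arr_eq_top_iff.1 htop)

end IsInvolutiveCIPoset

namespace IsEffectCIPoset

variable (h : IsEffectCIPoset mul arr)
include h

theorem inv_add (a b : P) : ∼(a ∔ b) = ∼a ⊙ ∼b := by
  rw [h.mul_eq, h.inv_inv b]

theorem le_inv_of_le_inv_add (hbc : b ≤ ∼c) (ha : a ≤ ∼(b ∔ c)) : a ≤ ∼b :=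
  ha.trans (h.inv_antitone (h.le_add hbc))

theorem add_le_inv_of_le_inv_add (hbc : b ≤ ∼c) (ha : a ≤ ∼(b ∔ c)) : a ∔ b ≤ ∼c := by
  have hab : a ≤ ∼b := h.le_inv_of_le_inv_add hbc ha
  rw [h.add_comm hab]
  exact h.add_le_inv_swap hbc (h.le_inv_symm hab) (h.le_inv_symm ha)

theorem add_assoc (hbc : b ≤ ∼c) (ha : a ≤ ∼(b ∔ c)) : a ∔ (b ∔ c) = a ∔ b ∔ c := by
  apply h.inv_injective
  have hbc' : ∼∼b ≤ ∼c := by rwa [h.inv_inv]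
  have ha' : ∼∼a ≤ ∼b ⊙ ∼c := by rwa [h.inv_inv, ← h.inv_add]
  calc
    ∼(a ∔ (b ∔ c)) = ∼a ⊙ (∼b ⊙ ∼c) := by rw [h.inv_add, h.inv_add b]
    _ = ∼a ⊙ ∼b ⊙ ∼c := h.mul_assoc hbc' ha'
    _ = ∼(a ∔ b ∔ c) := by rw [h.inv_add (a ∔ b), h.inv_add a]

theorem le_inv_inv_add_inv (hab : a ≤ b) : a ≤ ∼∼(a ∔ ∼b) := by
  rw [h.inv_inv]
  exact h.le_add (by rwa [h.inv_inv])

theorem add_inv_add_inv (hab : a ≤ b) : a ∔ ∼(a ∔ ∼b) = b := by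
  apply le_antisymm
  · have hswap : a ∔ ∼(a ∔ ∼b) ≤ ∼∼b :=
      h.add_le_inv_swap (by rwa [h.inv_inv]) (h.le_inv_inv_add_inv hab) (h.inv_inv _).ge
    rwa [h.inv_inv b] at hswap
  · calc
      b ≤ ∼a ⇒ ∼a ⊙ b := h.le_arr_mul ∼a b
      _ = a ∔ ∼(a ∔ ∼b) := by rw [h.mul_eq]

theorem le_iff_exists_add : a ≤ b ↔ ∃ c, a ≤ ∼c ∧ a ∔ c = b := by
  constructor
  · exact fun hab => ⟨∼(a ∔ ∼b), h.le_inv_inv_add_inv hab, h.add_inv_add_inv hab⟩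
  · rintro ⟨c, hac, rfl⟩
    exact h.le_add hac

end IsEffectCIPoset

end Poset

theorem IsCIPoset.arr_inf {S : Type*} [SemilatticeInf S] [BoundedOrder S] {mul arr : S → S → S}
    (h : IsCIPoset mul arr) (a b : S) : arr a (a ⊓ b) = arr a b :=
  eq_of_forall_le_iff fun c => by
    rw [← h.mul_le_iff, ← h.mul_le_iff, le_inf_iff, and_iff_right (h.mul_le_left a c)]

section Lattice

variable {mul arr : L → L → L}

namespace IsEffectCIPoset

/-- The partial algebra `(L; ⊕, 0, 1)` with `a ⊕ b = a′ → b` attached to an involutive CI-lattice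
satisfying (cw1)–(cw4). -/
def toWeakLEA (h : IsEffectCIPoset mul arr) : WeakLEA L where
  inv := ciInv arr
  inv_inv := h.inv_inv
  inv_antitone _ _ := h.inv_antitone
  add := ciAdd arr
  comm _ _ hab := ⟨h.le_inv_symm hab, h.add_comm hab⟩
  assoc _ _ _ hbc ha :=
    ⟨h.le_inv_of_le_inv_add hbc ha, h.add_le_inv_of_le_inv_add hbc ha, h.add_assoc hbc ha⟩
  add_zero := h.inv_inv

theorem isLEA_toWeakLEA (h : IsEffectCIPoset mul arr) : h.toWeakLEA.IsLEA :=
  ⟨h.add_inv_self, fun _ _ => h.eq_inv_of_add_eq_top,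
    fun _ ha => le_bot_iff.1 (ha.trans_eq h.inv_top), fun _ _ => h.le_iff_exists_add⟩

theorem sarrow_toWeakLEA (h : IsEffectCIPoset mul arr) (a b : L) :
    h.toWeakLEA.sarrow a b = arr a b :=
  calc
    arr (ciInv arr (ciInv arr a)) (a ⊓ b) = arr a (a ⊓ b) := by rw [h.inv_inv]
    _ = arr a b := h.arr_inf a b

end IsEffectCIPoset

end Lattice

/-- Corollary: let (L;≤,·,→,0,1) be an involutive CI-lattice (with a' := a→0)
satisfying (cw1)–(cw4).  Then L can be arranged into a lattice effect algebra
by setting a⊕b = a'→b whenever a ≤ b', in which a' is the orthosupplement of a,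
whose induced order coincides with ≤ and whose Sasaki arrow coincides with →. -/
theorem CILattice_to_LEA (mul arr : L → L → L)
    (CI1 : ∀ a : L, mul ⊤ a = a ∧ mul a ⊤ = a)
    (CI2 : ∀ a b c : L, mul a c ≤ b ↔ c ≤ arr a b)
    (inv_inv : ∀ a : L, arr (arr a ⊥) ⊥ = a)
    (inv_antitone : ∀ a b : L, a ≤ b → arr b ⊥ ≤ arr a ⊥)
    (cw1 : ∀ a b : L, mul a b = arr (arr a (arr b ⊥)) ⊥)
    (cw2 : ∀ a b : L, a ≤ arr b ⊥ →
      arr (arr a ⊥) b = arr (arr b ⊥) a ∧ a ≤ arr (arr a ⊥) b)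
    (cw3 : ∀ a b c : L, a ≤ arr b ⊥ → a ≤ arr c ⊥ →
      arr (arr a ⊥) b ≤ arr c ⊥ → arr (arr a ⊥) c ≤ arr b ⊥)
    (cw4 : ∀ a b c : L, arr b ⊥ ≤ c → arr a ⊥ ≤ mul b c →
      mul a (mul b c) = mul (mul a b) c) :
    ∃ W : WeakLEA L, W.inv = (fun a => arr a ⊥) ∧
      (∀ a b : L, a ≤ arr b ⊥ → W.add a b = arr (arr a ⊥) b) ∧
      W.IsLEA ∧
      (∀ a b : L, W.sarrow a b = arr a b) := by
  have h : IsEffectCIPoset mul arr :=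
    { top_mul := fun a => (CI1 a).1
      mul_top := fun a => (CI1 a).2
      mul_le_iff := CI2 _ _ _
      inv_inv := inv_inv
      inv_antitone := inv_antitone _ _
      mul_eq := cw1
      add_comm := fun hab => (cw2 _ _ hab).1
      le_add := fun hab => (cw2 _ _ hab).2
      add_le_inv_swap := cw3 _ _ _
      mul_assoc := cw4 _ _ _ }
  exact ⟨h.toWeakLEA, rfl, fun _ _ _ => rfl, h.isLEA_toWeakLEA, h.sarrow_toWeakLEA⟩
end

section
/- (Soundness of LEL) If ⊢φ is derivable in the proof system of LEL, then φ is valid in every model of LEL, i.e. V(φ)=1 for every lattice effect algebra E and every valuation V into E. -/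
/-- Formulas of LEL: atomic propositions, ⊥, and implication. -/
inductive Fml (P : Type*) : Type _
  | atom : P → Fml P
  | bot : Fml P
  | imp : Fml P → Fml P → Fml P

namespace Fml

variable {P : Type*}

/-- ¬φ = φ→⊥ -/
def neg (φ : Fml P) : Fml P := φ.imp .bot

/-- ⊤ = ¬⊥ -/
def top : Fml P := neg .bot

/-- φ⩑ψ = ¬(φ→¬ψ) -/
def conj (φ ψ : Fml P) : Fml P := neg (φ.imp ψ.neg)

/-- φ∧ψ = φ⩑(φ→ψ) -/
def wedge (φ ψ : Fml P) : Fml P := conj φ (φ.imp ψ)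

end Fml

/-- Provability in LEL: the least relation closed under the axiom schemata
(A1)–(A5) and the rules (R1)–(R10); the biconditional ⊢φ↔ψ abbreviates the
pair of assertions ⊢φ→ψ and ⊢ψ→φ, so axioms/rules with biconditionals are
split into two halves. -/
inductive Prov {P : Type*} : Fml P → Prop
  | A1 (φ : Fml P) : Prov (φ.imp φ)
  | A2a (φ : Fml P) : Prov (φ.imp φ.neg.neg)
  | A2b (φ : Fml P) : Prov (φ.neg.neg.imp φ)
  | A3 (φ : Fml P) : Prov (φ.imp Fml.top)
  | A4 (φ ψ : Fml P) : Prov ((φ.wedge ψ).imp φ)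
  | A5 (φ ψ : Fml P) : Prov ((φ.wedge ψ).imp ψ)
  | R1a {φ : Fml P} : Prov φ → Prov (Fml.top.imp φ)
  | R1b {φ : Fml P} : Prov (Fml.top.imp φ) → Prov φ
  | R2 {φ ψ χ : Fml P} : Prov (φ.imp ψ) → Prov (ψ.imp χ) → Prov (φ.imp χ)
  | R3 {φ ψ : Fml P} : Prov (φ.imp ψ) → Prov (ψ.neg.imp φ.neg)
  | R4a {φ ψ : Fml P} : Prov (φ.imp ψ) →
      Prov ((φ.neg.imp ψ).imp (ψ.neg.imp φ))
  | R4b {φ ψ : Fml P} : Prov (φ.imp ψ) →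
      Prov ((ψ.neg.imp φ).imp (φ.neg.imp ψ))
  | R5 {φ ψ : Fml P} : Prov (φ.imp ψ) → Prov (φ.imp (φ.neg.imp ψ))
  | R6 {φ ψ χ : Fml P} : Prov (φ.imp ψ) → Prov ((χ.conj φ).imp (χ.conj ψ))
  | R7a {φ ψ χ : Fml P} : Prov (φ.imp ψ) → Prov (ψ.imp φ) →
      Prov ((φ.conj χ).imp (ψ.conj χ))
  | R7b {φ ψ χ : Fml P} : Prov (φ.imp ψ) → Prov (ψ.imp φ) →
      Prov ((ψ.conj χ).imp (φ.conj χ))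
  | R8 {φ ψ χ : Fml P} : Prov (φ.imp ψ) → Prov (φ.imp χ) →
      Prov (φ.imp (ψ.wedge χ))
  | R9 {φ ψ χ : Fml P} : Prov (φ.imp ψ.neg) → Prov (φ.imp χ.neg) →
      Prov ((φ.neg.imp ψ).imp χ.neg) → Prov ((φ.neg.imp χ).imp ψ.neg)
  | R10a {φ ψ χ : Fml P} : Prov (ψ.neg.imp χ) → Prov (φ.neg.imp (ψ.conj χ)) →
      Prov ((φ.conj (ψ.conj χ)).imp ((φ.conj ψ).conj χ))
  | R10b {φ ψ χ : Fml P} : Prov (ψ.neg.imp χ) → Prov (φ.neg.imp (ψ.conj χ)) →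
      Prov (((φ.conj ψ).conj χ).imp (φ.conj (ψ.conj χ)))

/-- A lattice effect algebra: an effect algebra (partial operation encoded by a
definedness predicate `D` and a total function `add` whose value is only
meaningful on `D`) whose induced order `a ≤ b ↔ ∃ c, a⊕c = b` is a lattice;
the carrier's lattice order is required to coincide with the induced order. -/
structure LatticeEffectAlgebra (E : Type*) [Lattice E] [BoundedOrder E] where
  D : E → E → Prop
  add : E → E → E
  comm : ∀ a b : E, D a b → (D b a ∧ add a b = add b a)
  assoc : ∀ a b c : E, D b c → D a (add b c) →
    (D a b ∧ D (add a b) c ∧ add a (add b c) = add (add a b) c)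
  inv : E → E
  D_inv : ∀ a : E, D a (inv a)
  add_inv : ∀ a : E, add a (inv a) = ⊤
  inv_unique : ∀ a b : E, D a b → add a b = ⊤ → b = inv a
  D_top : ∀ a : E, D a ⊤ → a = ⊥
  le_iff : ∀ a b : E, a ≤ b ↔ ∃ c, D a c ∧ add a c = b

/-- Sasaki arrow: a→ₛb = a'⊕(a∧b). -/
def LatticeEffectAlgebra.sarrow {E : Type*} [Lattice E] [BoundedOrder E]
    (A : LatticeEffectAlgebra E) (a b : E) : E :=
  A.add (A.inv a) (a ⊓ b)

/-- The valuation of a model of LEL, extended from atomic propositions to all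
formulas (V(⊥) = 0 and V(φ→ψ) = V(φ)→ₛV(ψ)). -/
def Fml.eval {P : Type*} {E : Type*} [Lattice E] [BoundedOrder E]
    (A : LatticeEffectAlgebra E) (V : P → E) : Fml P → E
  | .atom p => V p
  | .bot => ⊥
  | .imp φ ψ => A.sarrow (φ.eval A V) (ψ.eval A V)

universe u

/-!
An implication `φ → ψ` takes the value `1` exactly when `V φ ≤ V ψ`, so each axiom or rule becomes
an inequality in the effect algebra. The only one that is more than bookkeeping with `⊕` and `'` is
(R4): `a ⊕ (a' ⊓ b) = b ⊕ (b' ⊓ a)` for `a ≤ b`. Write `b = a ⊕ c`. The translation `c ⊕ ·` is an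
order embedding onto an upper interval, hence preserves binary meets, and it sends `b'` to `a'` and
`a` to `b`; so `c ⊕ (b' ⊓ a) = a' ⊓ b`, and adding `a` gives the claim.
-/

namespace LatticeEffectAlgebra

variable {E : Type*} [Lattice E] [BoundedOrder E] (A : LatticeEffectAlgebra E) {a b c x y : E}

theorem D_comm : A.D a b ↔ A.D b a :=
  ⟨fun h => (A.comm a b h).1, fun h => (A.comm b a h).1⟩

protected theorem add_comm (h : A.D a b) : A.add a b = A.add b a :=
  (A.comm a b h).2

theorem inv_add (a : E) : A.add (A.inv a) a = ⊤ := by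
  rw [← A.add_comm (A.D_inv a), A.add_inv]

protected theorem inv_inv (a : E) : A.inv (A.inv a) = a :=
  (A.inv_unique _ _ (A.D_comm.1 (A.D_inv a)) (A.inv_add a)).symm

theorem inv_top : A.inv ⊤ = (⊥ : E) :=
  A.D_top _ (A.D_comm.1 (A.D_inv ⊤))

theorem inv_bot : A.inv ⊥ = (⊤ : E) := by
  rw [← A.inv_top, A.inv_inv]

theorem D_inv_add (h : A.D a b) : A.D a (A.inv (A.add a b)) :=
  A.D_comm.1 (A.assoc _ _ _ h (A.D_comm.1 (A.D_inv _))).1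

theorem add_inv_add (h : A.D a b) : A.add a (A.inv (A.add a b)) = A.inv b := by
  obtain ⟨_, hD, hassoc⟩ := A.assoc _ _ _ h (A.D_comm.1 (A.D_inv (A.add a b)))
  rw [A.inv_add] at hassoc
  rw [A.add_comm (A.D_inv_add h)]
  exact A.inv_unique _ _ (A.D_comm.1 hD) (by rw [← A.add_comm hD, ← hassoc])

theorem add_bot (a : E) : A.add a ⊥ = a := by
  rw [← A.inv_top, ← A.add_inv a, A.add_inv_add (A.D_inv a), A.inv_inv]

theorem le_add (h : A.D a b) : a ≤ A.add a b :=
  (A.le_iff _ _).2 ⟨b, h, rfl⟩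

theorem D_iff_le_inv : A.D a b ↔ a ≤ A.inv b := by
  constructor
  · exact fun h => (A.le_iff _ _).2 ⟨_, A.D_inv_add h, A.add_inv_add h⟩
  · intro h
    obtain ⟨c, hac, hc⟩ := (A.le_iff _ _).1 h
    exact A.D_comm.1 (A.assoc b a c hac (hc ▸ A.D_inv b)).1

theorem D_inv_right_iff_le : A.D a (A.inv b) ↔ a ≤ b := by
  rw [A.D_iff_le_inv, A.inv_inv]

protected theorem le_inv_comm : a ≤ A.inv b ↔ b ≤ A.inv a := by
  rw [← A.D_iff_le_inv, A.D_comm, A.D_iff_le_inv]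

protected theorem inv_le_inv_iff : A.inv a ≤ A.inv b ↔ b ≤ a := by
  rw [A.le_inv_comm, A.inv_inv]

theorem D_of_le_right (hxy : x ≤ y) (hy : A.D c y) : A.D c x :=
  A.D_iff_le_inv.2 ((A.D_iff_le_inv.1 hy).trans (A.inv_le_inv_iff.2 hxy))

theorem add_mono_right (hxy : x ≤ y) (hy : A.D c y) : A.add c x ≤ A.add c y := by
  obtain ⟨z, hz, rfl⟩ := (A.le_iff _ _).1 hxy
  obtain ⟨_, hD, hassoc⟩ := A.assoc _ _ _ hz hy
  exact (A.le_add hD).trans_eq hassoc.symm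

protected theorem add_le_add_iff_left (hx : A.D c x) (hy : A.D c y) :
    A.add c x ≤ A.add c y ↔ x ≤ y := by
  refine ⟨fun h => ?_, fun h => A.add_mono_right h hy⟩
  rw [← A.inv_le_inv_iff, ← A.add_inv_add hx, ← A.add_inv_add hy]
  exact A.add_mono_right (A.inv_le_inv_iff.2 h) (A.D_inv_add hx)

theorem add_inf (hx : A.D c x) (hy : A.D c y) :
    A.add c (x ⊓ y) = A.add c x ⊓ A.add c y := by
  apply le_antisymm (le_inf (A.add_mono_right inf_le_left hx) (A.add_mono_right inf_le_right hy))
  obtain ⟨d, hd, hcd⟩ := (A.le_iff _ _).1 (le_inf (A.le_add hx) (A.le_add hy))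
  have hdx : d ≤ x := (A.add_le_add_iff_left hd hx).1 (hcd.trans_le inf_le_left)
  have hdy : d ≤ y := (A.add_le_add_iff_left hd hy).1 (hcd.trans_le inf_le_right)
  rw [← hcd]
  exact A.add_mono_right (le_inf hdx hdy) (A.D_of_le_right inf_le_left hx)

theorem D_inv_inf (a b : E) : A.D (A.inv a) (a ⊓ b) :=
  A.D_of_le_right inf_le_left (A.D_comm.1 (A.D_inv a))

theorem sarrow_of_le (h : b ≤ a) : A.sarrow a b = A.add (A.inv a) b := by
  rw [sarrow, inf_eq_right.2 h]

theorem sarrow_bot (a : E) : A.sarrow a ⊥ = A.inv a := by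
  rw [A.sarrow_of_le bot_le, A.add_bot]

theorem sarrow_eq_top_iff : A.sarrow a b = ⊤ ↔ a ≤ b := by
  constructor
  · intro h
    have hinf : a ⊓ b = A.inv (A.inv a) := A.inv_unique _ _ (A.D_inv_inf a b) h
    exact inf_eq_left.1 (hinf.trans (A.inv_inv a))
  · intro h
    rw [sarrow, inf_eq_left.2 h, A.inv_add]

theorem inv_le_sarrow (a b : E) : A.inv a ≤ A.sarrow a b :=
  A.le_add (A.D_inv_inf a b)

theorem sarrow_mono_right (h : b ≤ c) : A.sarrow a b ≤ A.sarrow a c :=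
  A.add_mono_right (inf_le_inf_left a h) (A.D_inv_inf a c)

theorem sarrow_inv_comm_of_le (h : a ≤ b) : A.sarrow (A.inv a) b = A.sarrow (A.inv b) a := by
  obtain ⟨c, hac, rfl⟩ := (A.le_iff _ _).1 h
  have hca : A.D c a := A.D_comm.1 hac
  have hD : A.D c (A.inv (A.add a c)) := A.add_comm hac ▸ A.D_inv_add hca
  have hmeet : A.add c (A.inv (A.add a c) ⊓ a) = A.inv a ⊓ A.add a c := by
    rw [A.add_inf hD hca, A.add_comm hac, A.add_inv_add hca]
  calc A.sarrow (A.inv a) (A.add a c)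
    _ = A.add a (A.inv a ⊓ A.add a c) := by rw [sarrow, A.inv_inv]
    _ = A.add a (A.add c (A.inv (A.add a c) ⊓ a)) := by rw [hmeet]
    _ = A.add (A.add a c) (A.inv (A.add a c) ⊓ a) :=
      (A.assoc _ _ _ (A.D_of_le_right inf_le_left hD)
        (hmeet ▸ A.D_of_le_right inf_le_left (A.D_inv a))).2.2
    _ = A.sarrow (A.inv (A.add a c)) a := by rw [sarrow, A.inv_inv]

theorem sarrow_inv_of_D (h : A.D a b) : A.sarrow (A.inv a) b = A.add a b := by
  rw [A.sarrow_of_le (A.D_iff_le_inv.1 (A.D_comm.1 h)), A.inv_inv]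

theorem sarrow_inv_le_inv_swap (hab : a ≤ A.inv b) (h : A.sarrow (A.inv a) b ≤ A.inv c) :
    A.sarrow (A.inv a) c ≤ A.inv b := by
  rw [← A.D_iff_le_inv] at hab
  rw [A.sarrow_inv_of_D hab, ← A.D_iff_le_inv] at h
  obtain ⟨hca, hcab, _⟩ := A.assoc c a b hab (A.D_comm.1 h)
  rwa [A.sarrow_inv_of_D (A.D_comm.1 hca), ← A.D_iff_le_inv, ← A.add_comm hca]

/-- The Sasaki product `a ⩑ b = (a →ₛ b')'`, which interprets the connective `Fml.conj`. -/
def sprod (a b : E) : E :=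
  A.inv (A.sarrow a (A.inv b))

theorem sprod_of_inv_le (h : A.inv a ≤ b) : A.sprod a b = A.inv (A.add (A.inv a) (A.inv b)) := by
  rw [sprod, A.sarrow_of_le]
  rwa [← A.inv_le_inv_iff, A.inv_inv]

theorem sprod_mono_right (h : b ≤ c) : A.sprod a b ≤ A.sprod a c :=
  A.inv_le_inv_iff.2 (A.sarrow_mono_right (A.inv_le_inv_iff.2 h))

theorem sprod_sarrow (a b : E) : A.sprod a (A.sarrow a b) = a ⊓ b := by
  rw [A.sprod_of_inv_le (A.inv_le_sarrow a b), sarrow, A.add_inv_add (A.D_inv_inf a b), A.inv_inv]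

theorem sprod_assoc (hbc : A.inv b ≤ c) (habc : A.inv a ≤ A.sprod b c) :
    A.sprod a (A.sprod b c) = A.sprod (A.sprod a b) c := by
  have hprod := A.sprod_of_inv_le hbc
  have hD : A.D (A.inv a) (A.add (A.inv b) (A.inv c)) := A.D_iff_le_inv.2 (hprod ▸ habc)
  obtain ⟨hab, habc', hassoc⟩ := A.assoc _ _ _ (A.D_inv_right_iff_le.2 hbc) hD
  have hab_prod := A.sprod_of_inv_le (A.D_inv_right_iff_le.1 hab)
  have hle : A.inv (A.sprod a b) ≤ c := by
    rwa [hab_prod, A.inv_inv, ← A.D_inv_right_iff_le]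
  rw [A.sprod_of_inv_le habc, A.sprod_of_inv_le hle, hprod, hab_prod, A.inv_inv, A.inv_inv, hassoc]

end LatticeEffectAlgebra

namespace Fml

variable {P E : Type*} [Lattice E] [BoundedOrder E] (A : LatticeEffectAlgebra E) (V : P → E)

theorem eval_neg (φ : Fml P) : φ.neg.eval A V = A.inv (φ.eval A V) :=
  A.sarrow_bot _

theorem eval_top : (top : Fml P).eval A V = ⊤ := by
  rw [top, eval_neg, eval, A.inv_bot]

theorem eval_conj (φ ψ : Fml P) : (φ.conj ψ).eval A V = A.sprod (φ.eval A V) (ψ.eval A V) := by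
  rw [conj, eval_neg, eval, eval_neg, LatticeEffectAlgebra.sprod]

theorem eval_wedge (φ ψ : Fml P) : (φ.wedge ψ).eval A V = φ.eval A V ⊓ ψ.eval A V := by
  rw [wedge, eval_conj, eval, A.sprod_sarrow]

end Fml

/-- (Soundness of LEL) If ⊢φ then φ is valid in every model of LEL. -/
theorem LEL_soundness {P : Type*} {φ : Fml P} (h : Prov φ) :
    ∀ (E : Type u) [Lattice E] [BoundedOrder E]
      (A : LatticeEffectAlgebra E) (V : P → E), φ.eval A V = ⊤ := by
  intro E _ _ A V
  induction h with
    simp only [Fml.eval_wedge, Fml.eval_conj, Fml.eval_top, Fml.eval_neg, Fml.eval,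
      A.sarrow_eq_top_iff] at *
  | A1 => exact le_rfl
  | A2a => exact (A.inv_inv _).ge
  | A2b => exact (A.inv_inv _).le
  | A3 => exact le_top
  | A4 => exact inf_le_left
  | A5 => exact inf_le_right
  | R1a _ h => exact h.ge
  | R1b _ h => exact top_le_iff.1 h
  | R2 _ _ h₁ h₂ => exact h₁.trans h₂
  | R3 _ h => exact A.inv_le_inv_iff.2 h
  | R4a _ h => exact (A.sarrow_inv_comm_of_le h).le
  | R4b _ h => exact (A.sarrow_inv_comm_of_le h).ge
  | R5 _ h => exact (A.inv_inv _).ge.trans (A.inv_le_sarrow _ _)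
  | R6 _ h => exact A.sprod_mono_right h
  | R7a _ _ h₁ h₂ | R7b _ _ h₂ h₁ => exact (congrArg (A.sprod · _) (le_antisymm h₁ h₂)).le
  | R8 _ _ h₁ h₂ => exact le_inf h₁ h₂
  | R9 _ _ _ h₁ _ h₂ => exact A.sarrow_inv_le_inv_swap h₁ h₂
  | R10a _ _ h₁ h₂ => exact (A.sprod_assoc h₁ h₂).le
  | R10b _ _ h₁ h₂ => exact (A.sprod_assoc h₁ h₂).ge
end

section
/- (W6) Let (L;≤,⊕,',0,1) be a weak lattice effect algebra and a,r ∈ L. If a⊕a' is defined and a⊕a'=r, then r' ≤ a ≤ r. -/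
variable {L : Type*} [Lattice L] [BoundedOrder L]

namespace WeakLEA

variable (W : WeakLEA L) {a b : L}

theorem le_of_inv_le_inv (h : W.inv b ≤ W.inv a) : a ≤ b := by
  simpa only [W.inv_inv] using W.inv_antitone _ _ h

theorem inv_le_of_inv_le (h : W.inv a ≤ b) : W.inv b ≤ a := by
  simpa only [W.inv_inv] using W.inv_antitone _ _ h

-- With `s = a ⊕ b`, the sum `s' ⊕ (a ⊕ b)` is defined; reassociating it makes `s' ⊕ a` defined.
theorem le_add_right (hab : a ≤ W.inv b) : a ≤ W.add a b :=
  have inv_add_le : W.inv (W.add a b) ≤ W.inv a := (W.assoc _ a b hab le_rfl).1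
  W.le_of_inv_le_inv inv_add_le

theorem le_add_left (hab : a ≤ W.inv b) : b ≤ W.add a b := by
  obtain ⟨hba, add_comm⟩ := W.comm a b hab
  rw [add_comm]
  exact W.le_add_right hba

end WeakLEA

/-- (W6): if a⊕a' is defined and a⊕a' = r then r' ≤ a ≤ r. -/
theorem weakLEA_W6 (W : WeakLEA L) (a r : L)
    (hdef : a ≤ W.inv (W.inv a)) (h : W.add a (W.inv a) = r) :
    W.inv r ≤ a ∧ a ≤ r := by
  subst h
  exact ⟨W.inv_le_of_inv_le (W.le_add_left hdef), W.le_add_right hdef⟩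
end

section
/- (W8) Let (L;≤,⊕,',0,1) be a weak lattice effect algebra and a,b,c ∈ L. Then a⊕c is defined with a⊕c ≤ b if and only if b'⊕c is defined with b'⊕c ≤ a'. -/
variable {L : Type*} [Lattice L] [BoundedOrder L]

section InvolutivePreorder

variable {P : Type*} [Preorder P] {inv : P → P} {add : P → P → P}

theorem le_inv_symm_of_antitone (inv_involutive : Function.Involutive inv)
    (inv_antitone : Antitone inv) {a b : P} (hab : a ≤ inv b) : b ≤ inv a :=
  (inv_involutive b).ge.trans (inv_antitone hab)

/- `a ⊕ c ≤ b` says that `b' ⊕ (c ⊕ a)` is defined; reassociating to `(b' ⊕ c) ⊕ a` gives the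
conclusion. -/
theorem add_inv_le_inv_of_add_le
    (inv_involutive : Function.Involutive inv) (inv_antitone : Antitone inv)
    (add_comm : ∀ a b, a ≤ inv b → add a b = add b a)
    (add_assoc_defined : ∀ a b c, b ≤ inv c → a ≤ inv (add b c) → a ≤ inv b ∧ add a b ≤ inv c)
    {a b c : P} (hac : a ≤ inv c) (hb : add a c ≤ b) :
    inv b ≤ inv c ∧ add (inv b) c ≤ inv a := by
  have hca : c ≤ inv a := le_inv_symm_of_antitone inv_involutive inv_antitone hac
  have hb_ca : inv b ≤ inv (add c a) := inv_antitone ((add_comm c a hca).trans_le hb)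
  exact add_assoc_defined (inv b) c a hca hb_ca

theorem weakLEA_W8_general
    (inv_involutive : Function.Involutive inv) (inv_antitone : Antitone inv)
    (add_comm : ∀ a b, a ≤ inv b → add a b = add b a)
    (add_assoc_defined : ∀ a b c, b ≤ inv c → a ≤ inv (add b c) → a ≤ inv b ∧ add a b ≤ inv c)
    (a b c : P) :
    (a ≤ inv c ∧ add a c ≤ b) ↔ (inv b ≤ inv c ∧ add (inv b) c ≤ inv a) := by
  have transpose {x y : P} (h : x ≤ inv c ∧ add x c ≤ y) :
      inv y ≤ inv c ∧ add (inv y) c ≤ inv x :=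
    add_inv_le_inv_of_add_le inv_involutive inv_antitone add_comm add_assoc_defined h.1 h.2
  refine ⟨transpose, fun h => ?_⟩
  simpa only [inv_involutive a, inv_involutive b] using transpose h

end InvolutivePreorder

/-- (W8): a⊕c is defined with a⊕c ≤ b iff b'⊕c is defined with b'⊕c ≤ a'. -/
theorem weakLEA_W8 (W : WeakLEA L) (a b c : L) :
    (a ≤ W.inv c ∧ W.add a c ≤ b) ↔
      (W.inv b ≤ W.inv c ∧ W.add (W.inv b) c ≤ W.inv a) :=
  weakLEA_W8_general W.inv_inv W.inv_antitone (fun a b h => (W.comm a b h).2)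
    (fun a b c hbc ha => ⟨(W.assoc a b c hbc ha).1, (W.assoc a b c hbc ha).2.1⟩) a b c
end

section
/- (Derived rules of LEL) The following are derivable in the proof system of LEL, for all formulas φ, ψ: (A6) ⊢φ↔(φ⩑⊤); (R11) ⊢φ if and only if ⊢φ↔⊤; (R12) if ⊢φ and ⊢φ→ψ then ⊢ψ; (R13) if ⊢φ then ⊢ψ→φ; (R14) ⊢φ→ψ if and only if ⊢φ→(φ∧ψ). -/
/-!
Since `φ ∧ φ` unfolds to `φ ⩑ (φ → φ)`, (R8) and (A4) make `φ` equivalent to `φ ⩑ (φ → φ)`.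
The provable formula `φ → φ` is implied by every formula and implies every provable one, so the
monotonicity rule (R6) yields `(φ ⩑ ψ) → φ` for every `ψ`, and `φ → (φ ⩑ ψ)` for every provable
`ψ`; (A6) is the case `ψ = ⊤`.
-/

namespace Prov

variable {P : Type*} {φ ψ χ : Fml P}

theorem imp_intro (hφ : Prov φ) (ψ : Fml P) : Prov (ψ.imp φ) :=
  .R2 (.A3 ψ) (.R1a hφ)

theorem mp (hφψ : Prov (φ.imp ψ)) (hφ : Prov φ) : Prov ψ :=
  .R1b (.R2 (.R1a hφ) hφψ)

theorem top : Prov (Fml.top : Fml P) :=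
  .A1 .bot

theorem imp_and_imp_iff_of_right (hψ : Prov ψ) :
    Prov (φ.imp ψ) ∧ Prov (ψ.imp φ) ↔ Prov φ :=
  ⟨fun h => h.2.mp hψ, fun hφ => ⟨hψ.imp_intro φ, hφ.imp_intro ψ⟩⟩

theorem imp_wedge_iff :
    Prov (φ.imp (ψ.wedge χ)) ↔ Prov (φ.imp ψ) ∧ Prov (φ.imp χ) :=
  ⟨fun h => ⟨.R2 h (.A4 ψ χ), .R2 h (.A5 ψ χ)⟩, fun h => .R8 h.1 h.2⟩

theorem imp_conj_of_right (φ : Fml P) (hψ : Prov ψ) : Prov (φ.imp (φ.conj ψ)) :=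
  have imp_wedge_self : Prov (φ.imp (φ.wedge φ)) := imp_wedge_iff.2 ⟨.A1 φ, .A1 φ⟩
  .R2 imp_wedge_self (.R6 (hψ.imp_intro (φ.imp φ)))

theorem conj_imp_left (φ ψ : Fml P) : Prov ((φ.conj ψ).imp φ) :=
  have conj_imp_wedge_self : Prov ((φ.conj ψ).imp (φ.wedge φ)) :=
    .R6 ((Prov.A1 φ).imp_intro ψ)
  .R2 conj_imp_wedge_self (.A4 φ φ)

end Prov

/-- (A6), (R11)–(R14): derived axioms and rules of LEL. -/
theorem LEL_derived_rules {P : Type*} (φ ψ : Fml P) :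
    -- (A6) ⊢φ↔(φ⩑⊤)
    (Prov (φ.imp (φ.conj Fml.top)) ∧ Prov ((φ.conj Fml.top).imp φ)) ∧
    -- (R11) ⊢φ iff ⊢φ↔⊤
    (Prov φ ↔ (Prov (φ.imp Fml.top) ∧ Prov (Fml.top.imp φ))) ∧
    -- (R12) modus ponens
    (Prov φ → Prov (φ.imp ψ) → Prov ψ) ∧
    -- (R13)
    (Prov φ → Prov (ψ.imp φ)) ∧
    -- (R14)
    (Prov (φ.imp ψ) ↔ Prov (φ.imp (φ.wedge ψ))) := by
  refine ⟨⟨?A6_mp, ?A6_mpr⟩, ?R11, ?R12, ?R13, ?R14⟩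
  case A6_mp => exact Prov.imp_conj_of_right φ Prov.top
  case A6_mpr => exact Prov.conj_imp_left φ Fml.top
  case R11 => exact (Prov.imp_and_imp_iff_of_right Prov.top).symm
  case R12 => exact fun hφ hφψ => hφψ.mp hφ
  case R13 => exact fun hφ => hφ.imp_intro ψ
  case R14 => exact (Prov.imp_wedge_iff.trans (and_iff_right (.A1 φ))).symm
end
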